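/- Define H_n(v) = ( |Σ_{i=1}^{k_n} ε_{n,i}(μ_{n,i}((0,v]) − v)| + |Σ_{i=1}^{k_n} ε_{n,i}(μ_{n,i}((1−v,1)) − v)| ) / √(k_n v) for v ∈ (0,1/2). If (v_n) is a sequence in (0,1/2) such that a_n^{−1}·H_n(v_n) → ∞ and liminf_{n→∞} k_n v_n > 0, then a_n·HC_n − b_n → ∞ in Q_(n)-probability; i.e., for every C ∈ ℝ, Q_(n)(a_n·HC_n − b_n ≤ C) → 0. -/

import Mathlib

open MeasureTheory Filter Topology

noncomputable section

/-- Mixture `Q = (1-e)·P + e·μ`. -/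
def Qmix {α : Type*} [MeasurableSpace α] (P μ : Measure α) (e : ℝ) : Measure α :=
  (ENNReal.ofReal (1 - e)) • P + (ENNReal.ofReal e) • μ

/-- The uniform distribution on `(0,1)`. -/
def unif : Measure ℝ := volume.restrict (Set.Ioo 0 1)

/-- Empirical distribution function of `y : Fin k → ℝ` at `t`. -/
def empCdf (k : ℕ) (y : Fin k → ℝ) (t : ℝ) : ℝ :=
  (∑ i : Fin k, if y i ≤ t then (1 : ℝ) else 0) / k

/-- Higher criticism statistic
`HC = sup_{t ∈ (0,1)} |√k (𝔽(t) − t) / √(t(1−t))|`. -/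
def HCstat (k : ℕ) (y : Fin k → ℝ) : ℝ :=
  ⨆ t : Set.Ioo (0 : ℝ) 1,
    |Real.sqrt k * (empCdf k y t.1 - t.1) / Real.sqrt (t.1 * (1 - t.1))|

/-- Normalising constant `a_n = √(2 log log k_n)`. -/
def aHC (k : ℕ) : ℝ := Real.sqrt (2 * Real.log (Real.log k))

/-- Normalising constant
`b_n = 2 log log k_n + (1/2) log log log k_n − (1/2) log π`. -/
def bHC (k : ℕ) : ℝ :=
  2 * Real.log (Real.log k) + (1 / 2) * Real.log (Real.log (Real.log k)) -
    (1 / 2) * Real.log Real.pi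

/-- `H_n(v)` from Theorem 3.1/3.2. -/
def Hfun (μ : ℕ → ℕ → Measure ℝ) (ε : ℕ → ℕ → ℝ) (k : ℕ → ℕ) (n : ℕ) (v : ℝ) : ℝ :=
  (|∑ i ∈ Finset.range (k n), ε n i * (((μ n i) (Set.Ioc 0 v)).toReal - v)| +
   |∑ i ∈ Finset.range (k n), ε n i * (((μ n i) (Set.Ioo (1 - v) 1)).toReal - v)|) /
    Real.sqrt (k n * v)

/-- Product null measure (product of uniforms). -/
def PprodU (k : ℕ → ℕ) (n : ℕ) : Measure (Fin (k n) → ℝ) :=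
  Measure.pi (fun _ => unif)

/-- Product alternative measure `Q_(n)`. -/
def QprodU (μ : ℕ → ℕ → Measure ℝ) (ε : ℕ → ℕ → ℝ) (k : ℕ → ℕ) (n : ℕ) :
    Measure (Fin (k n) → ℝ) :=
  Measure.pi (fun i => Qmix unif (μ n i) (ε n i))

end
noncomputable section

/-!
One of the two tails `(0, v]` and `(1 - v, 1)` has an expected number of p-values that differs
from its uniform value `k v` by at least `H √(k v) / 2`. The number of p-values in that tail has
variance at most its mean, so by Chebyshev's inequality it deviates from `k v` by more than
`H √(k v) / 4` outside an event of probability at most `16 / H² + 8 / (H √(k v))`. The higher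
criticism statistic dominates this deviation divided by `√(k v)`, whence `HC > H / 4` outside the
same event. As `b ≤ 3 a² / 2` and `C ≤ a² / 2` eventually, `a HC - b ≤ C` forces `HC ≤ 2 a`, which
contradicts `HC > H / 4` once `H ≥ 8 a`.
-/

section Chebyshev

variable {ι : Type*} [Fintype ι] {X : ι → Type*} [∀ i, MeasurableSpace (X i)]
  (Q : ∀ i, Measure (X i)) [∀ i, IsProbabilityMeasure (Q i)] {A : ∀ i, Set (X i)}

theorem memLp_two_indicator_eval (hA : ∀ i, MeasurableSet (A i)) (i : ι) :
    MemLp (fun y : ∀ i, X i => (A i).indicator (1 : X i → ℝ) (y i)) 2 (Measure.pi Q) :=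
  ((memLp_const (1 : ℝ)).indicator (hA i)).comp_measurePreserving (measurePreserving_eval Q i)

theorem integral_sum_indicator_eval (hA : ∀ i, MeasurableSet (A i)) :
    ∫ y, ∑ i, (A i).indicator (1 : X i → ℝ) (y i) ∂Measure.pi Q = ∑ i, (Q i).real (A i) := by
  rw [integral_finsetSum _ fun i _ =>
    (memLp_two_indicator_eval Q hA i).integrable one_le_two]
  refine Finset.sum_congr rfl fun i _ => ?_
  rw [integral_comp_eval (μ := Q) (i := i) (f := (A i).indicator (1 : X i → ℝ))
    (stronglyMeasurable_one.indicator (hA i)).aestronglyMeasurable, integral_indicator_one (hA i)]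

theorem variance_sum_indicator_eval_le (hA : ∀ i, MeasurableSet (A i)) :
    ProbabilityTheory.variance (∑ i, fun y => (A i).indicator (1 : X i → ℝ) (y i)) (Measure.pi Q) ≤
      ∑ i, (Q i).real (A i) := by
  have memLp (i : ι) : MemLp ((A i).indicator (1 : X i → ℝ)) 2 (Q i) :=
    (memLp_const (1 : ℝ)).indicator (hA i)
  rw [ProbabilityTheory.variance_sum_pi memLp]
  refine Finset.sum_le_sum fun i _ => ?_
  calc ProbabilityTheory.variance ((A i).indicator 1) (Q i)
      ≤ ∫ x, ((A i).indicator (1 : X i → ℝ) ^ 2) x ∂Q i :=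
        ProbabilityTheory.variance_le_expectation_sq (memLp i).aestronglyMeasurable
    _ = ∫ x, (A i).indicator (1 : X i → ℝ) x ∂Q i := by
        congr 1 with x
        by_cases hx : x ∈ A i <;> simp [hx]
    _ = (Q i).real (A i) := integral_indicator_one (hA i)

theorem pi_real_le_abs_sum_indicator_sub_le (hA : ∀ i, MeasurableSet (A i)) {r : ℝ} (hr : 0 < r) :
    (Measure.pi Q).real
        {y | r ≤ |∑ i, (A i).indicator (1 : X i → ℝ) (y i) - ∑ i, (Q i).real (A i)|} ≤
      (∑ i, (Q i).real (A i)) / r ^ 2 := by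
  have chebyshev := ProbabilityTheory.meas_ge_le_variance_div_sq
    (memLp_finsetSum' Finset.univ fun i _ => memLp_two_indicator_eval Q hA i) hr
  simp only [Finset.sum_apply, integral_sum_indicator_eval Q hA] at chebyshev
  refine ENNReal.toReal_le_of_le_ofReal (by positivity)
    (chebyshev.trans (ENNReal.ofReal_le_ofReal ?_))
  gcongr
  exact variance_sum_indicator_eval_le Q hA

theorem pi_real_abs_sum_indicator_sub_le_half_le (hA : ∀ i, MeasurableSet (A i)) {x : ℝ}
    (hx : ∑ i, (Q i).real (A i) ≠ x) :
    (Measure.pi Q).real {y | |∑ i, (A i).indicator (1 : X i → ℝ) (y i) - x| ≤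
        |∑ i, (Q i).real (A i) - x| / 2} ≤
      4 * (∑ i, (Q i).real (A i)) / (∑ i, (Q i).real (A i) - x) ^ 2 := by
  set m := ∑ i, (Q i).real (A i)
  have m_sub_pos : 0 < |m - x| := abs_pos.2 (sub_ne_zero.2 hx)
  calc _ ≤ (Measure.pi Q).real
        {y | |m - x| / 2 ≤ |∑ i, (A i).indicator (1 : X i → ℝ) (y i) - m|} := by
        refine measureReal_mono fun y hy => ?_
        simp only [Set.mem_ofPred_eq] at hy ⊢
        linarith [abs_sub_le m (∑ i, (A i).indicator (1 : X i → ℝ) (y i)) x,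
          abs_sub_comm m (∑ i, (A i).indicator (1 : X i → ℝ) (y i))]
    _ ≤ m / (|m - x| / 2) ^ 2 := pi_real_le_abs_sum_indicator_sub_le Q hA (half_pos m_sub_pos)
    _ = 4 * m / (m - x) ^ 2 := by rw [div_pow, sq_abs, div_div_eq_mul_div]; ring

end Chebyshev

theorem four_mul_div_sub_sq_le {m x h : ℝ} (hx : 0 < x) (hh : 0 < h)
    (hm : h / 2 * √x ≤ |m - x|) :
    4 * m / (m - x) ^ 2 ≤ 16 / h ^ 2 + 8 / (h * √x) := by
  have dev_pos : 0 < |m - x| := lt_of_lt_of_le (by positivity) hm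
  calc 4 * m / (m - x) ^ 2 ≤ 4 * (x + |m - x|) / |m - x| ^ 2 := by
        rw [sq_abs]
        gcongr
        linarith [le_abs_self (m - x)]
    _ = 4 * x / |m - x| ^ 2 + 4 / |m - x| := by field_simp
    _ ≤ 4 * x / (h / 2 * √x) ^ 2 + 4 / (h / 2 * √x) := by gcongr
    _ = 16 / h ^ 2 + 8 / (h * √x) := by
        rw [mul_pow, Real.sq_sqrt hx.le]
        field_simp
        ring

section HigherCriticism

-- The factor `t * (1 - t)` absorbs the singularities of `1 / √(t * (1 - t))` at `0` and `1`.
theorem abs_indicator_le_sub_le {y t : ℝ} (hy : y ∈ Set.Ioo (0 : ℝ) 1)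
    (ht : t ∈ Set.Ioo (0 : ℝ) 1) :
    |(if y ≤ t then (1 : ℝ) else 0) - t| ≤ t * (1 - t) / (y * (1 - y)) := by
  obtain ⟨y_pos, y_lt⟩ := hy
  obtain ⟨t_pos, t_lt⟩ := ht
  have : 0 < 1 - y := sub_pos.2 y_lt
  rw [le_div_iff₀ (by positivity)]
  split_ifs with hyt
  · have : y * (1 - y) ≤ t := by nlinarith
    rw [abs_of_pos (sub_pos.2 t_lt), mul_comm t]
    gcongr
  · have : y * (1 - y) ≤ 1 - t := by nlinarith
    rw [zero_sub, abs_neg, abs_of_pos t_pos]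
    gcongr

variable {K : ℕ} {y : Fin K → ℝ}

theorem natCast_mul_empCdf_sub (K : ℕ) (y : Fin K → ℝ) (t : ℝ) :
    K * (empCdf K y t - t) = ∑ i, ((if y i ≤ t then (1 : ℝ) else 0) - t) := by
  obtain rfl | hK := K.eq_zero_or_pos
  · simp
  · simp only [empCdf, Finset.sum_sub_distrib, Finset.sum_const, Finset.card_univ,
      Fintype.card_fin, nsmul_eq_mul]
    field_simp

theorem sqrt_mul_empCdf_sub_div (K : ℕ) (y : Fin K → ℝ) (t : ℝ) :
    √K * (empCdf K y t - t) / √(t * (1 - t)) =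
      (∑ i, ((if y i ≤ t then (1 : ℝ) else 0) - t)) / √(K * (t * (1 - t))) := by
  rw [← natCast_mul_empCdf_sub, Real.sqrt_mul K.cast_nonneg, ← div_div,
    mul_div_right_comm (K : ℝ), Real.div_sqrt]

theorem HCstat_nonneg (K : ℕ) (y : Fin K → ℝ) : 0 ≤ HCstat K y :=
  Real.iSup_nonneg fun _ => abs_nonneg _

theorem bddAbove_range_standardized_empCdf (hy : ∀ i, y i ∈ Set.Ioo (0 : ℝ) 1) :
    BddAbove (Set.range fun t : Set.Ioo (0 : ℝ) 1 =>
      |√K * (empCdf K y t.1 - t.1) / √(t.1 * (1 - t.1))|) := by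
  refine ⟨(∑ i, 1 / (y i * (1 - y i))) / √K, ?_⟩
  rintro _ ⟨⟨t, ht⟩, rfl⟩
  have var_pos : 0 < t * (1 - t) := mul_pos ht.1 (sub_pos.2 ht.2)
  have var_le_one : t * (1 - t) ≤ 1 := by nlinarith [ht.1, ht.2]
  have weights_nonneg : 0 ≤ ∑ i, 1 / (y i * (1 - y i)) :=
    Finset.sum_nonneg fun i _ =>
      one_div_nonneg.2 (mul_nonneg (hy i).1.le (sub_nonneg.2 (hy i).2.le))
  calc |√K * (empCdf K y t - t) / √(t * (1 - t))|
      = |∑ i, ((if y i ≤ t then (1 : ℝ) else 0) - t)| / (√K * √(t * (1 - t))) := by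
        rw [sqrt_mul_empCdf_sub_div, abs_div, abs_of_nonneg (Real.sqrt_nonneg _),
          Real.sqrt_mul K.cast_nonneg]
    _ ≤ (∑ i, t * (1 - t) / (y i * (1 - y i))) / (√K * √(t * (1 - t))) := by
        gcongr
        exact (Finset.abs_sum_le_sum_abs _ _).trans
          (Finset.sum_le_sum fun i _ => abs_indicator_le_sub_le (hy i) ht)
    _ = √(t * (1 - t)) * ((∑ i, 1 / (y i * (1 - y i))) / √K) := by
        simp only [div_eq_mul_one_div (t * (1 - t)), ← Finset.mul_sum]
        rw [mul_comm √(K : ℝ), ← div_div, mul_div_right_comm, Real.div_sqrt, mul_div_assoc]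
    _ ≤ (∑ i, 1 / (y i * (1 - y i))) / √K :=
        mul_le_of_le_one_left (by positivity) (Real.sqrt_le_one.2 var_le_one)

theorem abs_sum_indicator_le_sub_le_HCstat_mul (hy : ∀ i, y i ∈ Set.Ioo (0 : ℝ) 1) {t : ℝ}
    (ht : t ∈ Set.Ioo (0 : ℝ) 1) :
    |∑ i, ((if y i ≤ t then (1 : ℝ) else 0) - t)| ≤ HCstat K y * √(K * (t * (1 - t))) := by
  obtain rfl | hK := K.eq_zero_or_pos
  · simp
  have var_pos : 0 < K * (t * (1 - t)) :=
    mul_pos (Nat.cast_pos.2 hK) (mul_pos ht.1 (sub_pos.2 ht.2))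
  have le_HC : |√K * (empCdf K y t - t) / √(t * (1 - t))| ≤ HCstat K y :=
    le_ciSup (bddAbove_range_standardized_empCdf hy) ⟨t, ht⟩
  rwa [sqrt_mul_empCdf_sub_div, abs_div, abs_of_nonneg (Real.sqrt_nonneg _),
    div_le_iff₀ (Real.sqrt_pos.2 var_pos)] at le_HC

theorem abs_sum_indicator_Ioc_sub_le_HCstat_mul (hy : ∀ i, y i ∈ Set.Ioo (0 : ℝ) 1) {v : ℝ}
    (hv : v ∈ Set.Ioo (0 : ℝ) 1) :
    |∑ i, (Set.Ioc 0 v).indicator (1 : ℝ → ℝ) (y i) - K * v| ≤ HCstat K y * √(K * v) := by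
  have count_eq : ∑ i, (Set.Ioc 0 v).indicator (1 : ℝ → ℝ) (y i) - K * v =
      ∑ i, ((if y i ≤ v then (1 : ℝ) else 0) - v) := by
    simp [Set.indicator_apply, (hy _).1]
  have var_le : v * (1 - v) ≤ v := mul_le_of_le_one_right hv.1.le (sub_le_self 1 hv.1.le)
  rw [count_eq]
  refine (abs_sum_indicator_le_sub_le_HCstat_mul hy hv).trans ?_
  gcongr
  exact HCstat_nonneg K y

theorem abs_sum_indicator_Ioo_sub_le_HCstat_mul (hy : ∀ i, y i ∈ Set.Ioo (0 : ℝ) 1) {v : ℝ}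
    (hv : v ∈ Set.Ioo (0 : ℝ) 1) :
    |∑ i, (Set.Ioo (1 - v) 1).indicator (1 : ℝ → ℝ) (y i) - K * v| ≤
      HCstat K y * √(K * v) := by
  have indicator_eq (i : Fin K) : (Set.Ioo (1 - v) 1).indicator (1 : ℝ → ℝ) (y i) - v =
      -((if y i ≤ 1 - v then (1 : ℝ) else 0) - (1 - v)) := by
    by_cases hi : y i ≤ 1 - v
    · simp [hi, hi.not_gt]
    · simp [hi, lt_of_not_ge hi, (hy i).2]
  have count_eq : ∑ i, (Set.Ioo (1 - v) 1).indicator (1 : ℝ → ℝ) (y i) - K * v =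
      -∑ i, ((if y i ≤ 1 - v then (1 : ℝ) else 0) - (1 - v)) := by
    simp only [← Finset.sum_neg_distrib, ← indicator_eq]
    simp
  have var_le : (1 - v) * (1 - (1 - v)) ≤ v := by nlinarith [sq_nonneg v]
  rw [count_eq, abs_neg]
  refine (abs_sum_indicator_le_sub_le_HCstat_mul hy
    ⟨sub_pos.2 hv.2, sub_lt_self 1 hv.1⟩).trans ?_
  gcongr
  exact HCstat_nonneg K y

end HigherCriticism

section TailShift

variable {K : ℕ} (Q : Fin K → Measure ℝ) [∀ i, IsProbabilityMeasure (Q i)] {v h : ℝ}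

theorem pi_real_HCstat_le_of_tail (hQ : ∀ i, ∀ᵐ x ∂Q i, x ∈ Set.Ioo (0 : ℝ) 1) {A : Set ℝ}
    (hA : MeasurableSet A) (hKv : 0 < K * v) (hh : 0 < h)
    (hHC : ∀ y : Fin K → ℝ, (∀ i, y i ∈ Set.Ioo (0 : ℝ) 1) →
      |∑ i, A.indicator (1 : ℝ → ℝ) (y i) - K * v| ≤ HCstat K y * √(K * v))
    (hshift : h / 2 * √(K * v) ≤ |∑ i, (Q i).real A - K * v|) :
    (Measure.pi Q).real {y | HCstat K y ≤ h / 4} ≤ 16 / h ^ 2 + 8 / (h * √(K * v)) := by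
  have mean_ne : ∑ i, (Q i).real A ≠ K * v :=
    sub_ne_zero.1 (abs_pos.1 ((mul_pos (half_pos hh) (Real.sqrt_pos.2 hKv)).trans_le hshift))
  have mem_Ioo : ∀ᵐ y ∂Measure.pi Q, ∀ i, y i ∈ Set.Ioo (0 : ℝ) 1 :=
    ae_all_iff.2 fun i => Measure.tendsto_eval_ae_ae.eventually (hQ i)
  calc (Measure.pi Q).real {y | HCstat K y ≤ h / 4}
      ≤ (Measure.pi Q).real {y | |∑ i, A.indicator (1 : ℝ → ℝ) (y i) - K * v| ≤
          |∑ i, (Q i).real A - K * v| / 2} := by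
        refine ENNReal.toReal_mono (measure_ne_top _ _) (measure_mono_ae ?_)
        filter_upwards [mem_Ioo] with y hy (hle : HCstat K y ≤ h / 4)
        change |_| ≤ _
        calc _ ≤ HCstat K y * √(K * v) := hHC y hy
          _ ≤ h / 4 * √(K * v) := by gcongr
          _ ≤ _ := by linarith
    _ ≤ 4 * (∑ i, (Q i).real A) / (∑ i, (Q i).real A - K * v) ^ 2 :=
        pi_real_abs_sum_indicator_sub_le_half_le Q (fun _ => hA) mean_ne
    _ ≤ 16 / h ^ 2 + 8 / (h * √(K * v)) := four_mul_div_sub_sq_le hKv hh hshift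

theorem pi_real_HCstat_le_of_two_tails (hQ : ∀ i, ∀ᵐ x ∂Q i, x ∈ Set.Ioo (0 : ℝ) 1)
    (hK : 0 < K) (hv : v ∈ Set.Ioo (0 : ℝ) 1) (hh : 0 < h)
    (hshift : h * √(K * v) ≤ |∑ i, (Q i).real (Set.Ioc 0 v) - K * v| +
      |∑ i, (Q i).real (Set.Ioo (1 - v) 1) - K * v|) :
    (Measure.pi Q).real {y | HCstat K y ≤ h / 4} ≤ 16 / h ^ 2 + 8 / (h * √(K * v)) := by
  have hKv : 0 < K * v := mul_pos (Nat.cast_pos.2 hK) hv.1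
  obtain lower | upper : h / 2 * √(K * v) ≤ |∑ i, (Q i).real (Set.Ioc 0 v) - K * v| ∨
      h / 2 * √(K * v) ≤ |∑ i, (Q i).real (Set.Ioo (1 - v) 1) - K * v| := by
    by_contra!
    linarith
  · exact pi_real_HCstat_le_of_tail Q hQ measurableSet_Ioc hKv hh
      (fun y hy => abs_sum_indicator_Ioc_sub_le_HCstat_mul hy hv) lower
  · exact pi_real_HCstat_le_of_tail Q hQ measurableSet_Ioo hKv hh
      (fun y hy => abs_sum_indicator_Ioo_sub_le_HCstat_mul hy hv) upper

end TailShift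

section Mixture

variable {α : Type*} [MeasurableSpace α] {P ν : Measure α} {e : ℝ}

theorem Qmix_real [IsFiniteMeasure P] [IsFiniteMeasure ν] (he : e ∈ Set.Icc (0 : ℝ) 1)
    (A : Set α) : (Qmix P ν e).real A = P.real A + e * (ν.real A - P.real A) := by
  have : IsFiniteMeasure (ENNReal.ofReal (1 - e) • P) := P.smul_finite ENNReal.ofReal_ne_top
  have : IsFiniteMeasure (ENNReal.ofReal e • ν) := ν.smul_finite ENNReal.ofReal_ne_top
  rw [Qmix, measureReal_add_apply, measureReal_ennreal_smul_apply, measureReal_ennreal_smul_apply,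
    ENNReal.toReal_ofReal he.1, ENNReal.toReal_ofReal (sub_nonneg.2 he.2)]
  ring

theorem isProbabilityMeasure_Qmix [IsProbabilityMeasure P] [IsProbabilityMeasure ν]
    (he : e ∈ Set.Icc (0 : ℝ) 1) : IsProbabilityMeasure (Qmix P ν e) := by
  constructor
  simp only [Qmix, Measure.add_apply, Measure.smul_apply, smul_eq_mul, measure_univ, mul_one]
  rw [← ENNReal.ofReal_add (sub_nonneg.2 he.2) he.1, sub_add_cancel, ENNReal.ofReal_one]

theorem ae_Qmix {p : α → Prop} (hP : ∀ᵐ x ∂P, p x) (hν : ∀ᵐ x ∂ν, p x) :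
    ∀ᵐ x ∂Qmix P ν e, p x :=
  ae_add_measure_iff.2 ⟨Measure.ae_smul_measure hP _, Measure.ae_smul_measure hν _⟩

theorem sum_Qmix_real_sub [IsFiniteMeasure P] {μ : ℕ → Measure α} {ε : ℕ → ℝ}
    [∀ i, IsFiniteMeasure (μ i)] (hε : ∀ i, ε i ∈ Set.Icc (0 : ℝ) 1) (K : ℕ) (A : Set α) :
    ∑ i : Fin K, (Qmix P (μ i) (ε i)).real A - K * P.real A =
      ∑ i ∈ Finset.range K, ε i * ((μ i).real A - P.real A) := by
  simp only [Qmix_real (hε _), Finset.sum_add_distrib, Finset.sum_range, Finset.sum_const,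
    Finset.card_univ, Fintype.card_fin, nsmul_eq_mul, add_sub_cancel_left]

end Mixture

section Uniform

instance isProbabilityMeasure_unif : IsProbabilityMeasure unif :=
  ⟨by simp [unif]⟩

theorem unif_real_of_subset {A : Set ℝ} (hA : A ⊆ Set.Ioo 0 1) : unif.real A = volume.real A := by
  rw [unif, measureReal_restrict_apply' measurableSet_Ioo, Set.inter_eq_left.2 hA]

theorem unif_real_Ioc {v : ℝ} (hv : v ∈ Set.Ioo (0 : ℝ) 1) : unif.real (Set.Ioc 0 v) = v := by
  rw [unif_real_of_subset fun x hx => ⟨hx.1, hx.2.trans_lt hv.2⟩,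
    Real.volume_real_Ioc_of_le hv.1.le, sub_zero]

theorem unif_real_Ioo {v : ℝ} (hv : v ∈ Set.Ioo (0 : ℝ) 1) :
    unif.real (Set.Ioo (1 - v) 1) = v := by
  rw [unif_real_of_subset fun x hx => ⟨(sub_pos.2 hv.2).trans hx.1, hx.2⟩,
    Real.volume_real_Ioo_of_le (sub_le_self 1 hv.1.le), sub_sub_cancel]

end Uniform

section Alternative

variable {k : ℕ → ℕ} {μ : ℕ → ℕ → Measure ℝ} {ε : ℕ → ℕ → ℝ} {n : ℕ}

theorem Hfun_mul_sqrt [∀ i, IsFiniteMeasure (μ n i)] (hε : ∀ i, ε n i ∈ Set.Icc (0 : ℝ) 1)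
    (hk : 0 < k n) {v : ℝ} (hv : v ∈ Set.Ioo (0 : ℝ) 1) :
    Hfun μ ε k n v * √(k n * v) =
      |∑ i : Fin (k n), (Qmix unif (μ n i) (ε n i)).real (Set.Ioc 0 v) - k n * v| +
      |∑ i : Fin (k n), (Qmix unif (μ n i) (ε n i)).real (Set.Ioo (1 - v) 1) - k n * v| := by
  have sqrt_pos : 0 < √(k n * v) := Real.sqrt_pos.2 (mul_pos (Nat.cast_pos.2 hk) hv.1)
  have lower := sum_Qmix_real_sub (P := unif) (μ := μ n) hε (k n) (Set.Ioc 0 v)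
  have upper := sum_Qmix_real_sub (P := unif) (μ := μ n) hε (k n) (Set.Ioo (1 - v) 1)
  rw [unif_real_Ioc hv] at lower
  rw [unif_real_Ioo hv] at upper
  rw [lower, upper, Hfun, div_mul_cancel₀ _ sqrt_pos.ne']
  rfl

theorem isProbabilityMeasure_QprodU [∀ i, IsProbabilityMeasure (μ n i)]
    (hε : ∀ i, ε n i ∈ Set.Icc (0 : ℝ) 1) :
    IsProbabilityMeasure (QprodU μ ε k n) := by
  have (i : Fin (k n)) : IsProbabilityMeasure (Qmix unif (μ n i) (ε n i)) :=
    isProbabilityMeasure_Qmix (hε i)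
  exact Measure.pi.instIsProbabilityMeasure _

theorem QprodU_real_HCstat_le [∀ i, IsProbabilityMeasure (μ n i)]
    (hμ01 : ∀ i, μ n i (Set.Ioo (0 : ℝ) 1) = 1)
    (hε : ∀ i, ε n i ∈ Set.Icc (0 : ℝ) 1) (hk : 0 < k n) {v : ℝ} (hv : v ∈ Set.Ioo (0 : ℝ) 1)
    (hH : 0 < Hfun μ ε k n v) :
    (QprodU μ ε k n).real {y | HCstat (k n) y ≤ Hfun μ ε k n v / 4} ≤
      16 / Hfun μ ε k n v ^ 2 + 8 / (Hfun μ ε k n v * √(k n * v)) := by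
  have (i : Fin (k n)) : IsProbabilityMeasure (Qmix unif (μ n i) (ε n i)) :=
    isProbabilityMeasure_Qmix (hε i)
  have mem_Ioo (i : Fin (k n)) : ∀ᵐ x ∂Qmix unif (μ n i) (ε n i), x ∈ Set.Ioo (0 : ℝ) 1 :=
    ae_Qmix (ae_restrict_mem measurableSet_Ioo)
      ((mem_ae_iff_prob_eq_one measurableSet_Ioo).2 (hμ01 i))
  exact pi_real_HCstat_le_of_two_tails _ mem_Ioo hk hv hH (Hfun_mul_sqrt hε hk hv).le

end Alternative

section Asymptotics

theorem tendsto_log_log_natCast_atTop :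
    Tendsto (fun K : ℕ => Real.log (Real.log K)) atTop atTop :=
  Real.tendsto_log_atTop.comp (Real.tendsto_log_atTop.comp tendsto_natCast_atTop_atTop)

theorem tendsto_aHC_atTop : Tendsto aHC atTop atTop :=
  Real.tendsto_sqrt_atTop.comp (tendsto_log_log_natCast_atTop.const_mul_atTop two_pos)

theorem bHC_le_three_halves_mul_aHC_sq {K : ℕ} (hK : 0 ≤ Real.log (Real.log K)) :
    bHC K ≤ 3 / 2 * aHC K ^ 2 := by
  have log_log_log_le := Real.log_le_self hK
  have log_pi_nonneg : 0 ≤ Real.log Real.pi := Real.log_nonneg (by linarith [Real.pi_gt_three])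
  rw [aHC, Real.sq_sqrt (by positivity), bHC]
  linarith

theorem eventually_add_bHC_le (C : ℝ) : ∀ᶠ K in atTop, C + bHC K ≤ 2 * aHC K ^ 2 := by
  have aHC_sq_atTop : Tendsto (fun K => aHC K ^ 2) atTop atTop :=
    (tendsto_pow_atTop two_ne_zero).comp tendsto_aHC_atTop
  filter_upwards [tendsto_log_log_natCast_atTop.eventually_ge_atTop 0,
    aHC_sq_atTop.eventually_ge_atTop (2 * C)] with K hK hC
  linarith [bHC_le_three_halves_mul_aHC_sq hK]

theorem le_two_mul_aHC_of_mul_sub_bHC_le {K : ℕ} {C x : ℝ} (ha : 0 < aHC K)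
    (hC : C + bHC K ≤ 2 * aHC K ^ 2) (hx : aHC K * x - bHC K ≤ C) : x ≤ 2 * aHC K :=
  le_of_mul_le_mul_left (by linarith) ha

variable {ι : Type*} {l : Filter ι} {f g : ι → ℝ}

theorem tendsto_atTop_of_div_atTop (hfg : Tendsto (fun n => f n / g n) l atTop)
    (hg : Tendsto g l atTop) : Tendsto f l atTop := by
  refine (hfg.atTop_mul_atTop₀ hg).congr' ?_
  filter_upwards [hg.eventually_gt_atTop 0] with n hn
  exact div_mul_cancel₀ _ hn.ne'

theorem tendsto_mul_sqrt_atTop {c : ℝ} (hf : Tendsto f l atTop) (hc : 0 < c)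
    (hg : ∀ᶠ n in l, c ≤ g n) : Tendsto (fun n => f n * √(g n)) l atTop := by
  refine tendsto_atTop_mono' l ?_ (hf.atTop_mul_const (Real.sqrt_pos.2 hc))
  filter_upwards [hg, hf.eventually_ge_atTop 0] with n hn hfn
  gcongr

end Asymptotics

theorem statement8_general
    (k : ℕ → ℕ) (μ : ℕ → ℕ → Measure ℝ) (ε : ℕ → ℕ → ℝ) (v : ℕ → ℝ)
    (hk : Tendsto k atTop atTop)
    (hμ : ∀ n i, IsProbabilityMeasure (μ n i))
    (hμ01 : ∀ n i, (μ n i) (Set.Ioo (0 : ℝ) 1) = 1)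
    (hε : ∀ n i, ε n i ∈ Set.Icc (0 : ℝ) 1)
    (hv : ∀ n, v n ∈ Set.Ioo (0 : ℝ) 1)
    (hH : Tendsto (fun n => Hfun μ ε k n (v n) / aHC (k n)) atTop atTop)
    (hshift : Tendsto (fun n => Hfun μ ε k n (v n) * √(k n * v n)) atTop atTop) (C : ℝ) :
    Tendsto (fun n => (QprodU μ ε k n).real {y | aHC (k n) * HCstat (k n) y - bHC (k n) ≤ C})
      atTop (𝓝 0) := by
  have a_atTop : Tendsto (fun n => aHC (k n)) atTop atTop := tendsto_aHC_atTop.comp hk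
  have H_atTop : Tendsto (fun n => Hfun μ ε k n (v n)) atTop atTop :=
    tendsto_atTop_of_div_atTop hH a_atTop
  have bound_zero : Tendsto (fun n => 16 / Hfun μ ε k n (v n) ^ 2 +
      8 / (Hfun μ ε k n (v n) * √(k n * v n))) atTop (𝓝 0) := by
    simpa only [Function.comp_def, add_zero] using
      (((tendsto_pow_atTop two_ne_zero).comp H_atTop).const_div_atTop 16).add
        (hshift.const_div_atTop 8)
  refine squeeze_zero' (Eventually.of_forall fun n => measureReal_nonneg) ?_ bound_zero
  filter_upwards [hk.eventually_gt_atTop 0, a_atTop.eventually_gt_atTop 0,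
    H_atTop.eventually_gt_atTop 0, hH.eventually_ge_atTop 8,
    hk.eventually (eventually_add_bHC_le C)] with n k_pos a_pos H_pos ratio_ge C_add_b_le
  have := isProbabilityMeasure_QprodU (k := k) (μ := μ) (hε n)
  refine le_trans (measureReal_mono fun y hy => ?_)
    (QprodU_real_HCstat_le (hμ01 n) (hε n) k_pos (hv n) H_pos)
  have HC_le : HCstat (k n) y ≤ 2 * aHC (k n) :=
    le_two_mul_aHC_of_mul_sub_bHC_le a_pos C_add_b_le hy
  have H_ge : 8 * aHC (k n) ≤ Hfun μ ε k n (v n) := (le_div_iff₀ a_pos).1 ratio_ge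
  exact HC_le.trans (by linarith)

/-- completely detectable by higher criticism: if `H_n(v_n)/a_n → ∞`
and `liminf k_n v_n > 0`, then `a_n·HC_n − b_n → ∞` in `Q_(n)`-probability. -/
theorem statement8
    (k : ℕ → ℕ) (μ : ℕ → ℕ → Measure ℝ) (ε : ℕ → ℕ → ℝ) (v : ℕ → ℝ)
    (hk : Tendsto k atTop atTop)
    (hμ : ∀ n i, IsProbabilityMeasure (μ n i))
    (hμ01 : ∀ n i, (μ n i) (Set.Ioo (0 : ℝ) 1) = 1)
    (hε : ∀ n i, ε n i ∈ Set.Icc (0 : ℝ) 1)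
    (hεmax : Tendsto (fun n => ⨆ i : Fin (k n), ε n i) atTop (nhds 0))
    (hv : ∀ n, v n ∈ Set.Ioo (0 : ℝ) (1 / 2))
    (hH : Tendsto (fun n => Hfun μ ε k n (v n) / aHC (k n)) atTop atTop)
    (hkv : ∃ c : ℝ, 0 < c ∧ ∀ᶠ n in atTop, c ≤ (k n : ℝ) * v n) :
    ∀ C : ℝ,
      Tendsto (fun n =>
          ((QprodU μ ε k n) {y | aHC (k n) * HCstat (k n) y - bHC (k n) ≤ C}).toReal)
        atTop (nhds 0) := by
  intro C
  obtain ⟨c, hc, hcv⟩ := hkv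
  have H_atTop := tendsto_atTop_of_div_atTop hH (tendsto_aHC_atTop.comp hk)
  exact statement8_general k μ ε v hk hμ hμ01 hε
    (fun n => ⟨(hv n).1, (hv n).2.trans one_half_lt_one⟩) hH
    (tendsto_mul_sqrt_atTop H_atTop hc hcv) C

end
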